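/- arXiv:0706.3451 — 2 statements merged into one kernel-verified Lean document; each statement's English description precedes it below -/
import Mathlib

section
/- Let (A, 𝔪, k) be a commutative Noetherian local ring and suppose M is a finitely generated A-module of free reducible complexity with cx M = c > 0; choose modules M = K_0, K_1, …, K_c, integers n_1, …, n_c ≥ 0 and exact sequences 0 → K_{i−1} → K_i → Ω^{n_i}_A(K_{i−1}) → 0 with cx K_i = c − i, and set b = max_i { depth A − depth K_i }. Then for any finitely generated A-module N the following are equivalent: (i) there exists an integer t > b such that Ext^{t+i}_A(M,N) = 0 for all 0 ≤ i ≤ n_1 + ⋯ + n_c; (ii) Ext^i_A(M,N) = 0 for all i ≫ 0; (iii) Ext^i_A(M,N) = 0 for all i > b. -/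
open CategoryTheory Opposite Filter IsLocalRing

universe u

namespace ComplexityTest

variable (A : Type u) [CommRing A] [IsLocalRing A]

structure MinFreeRes (M : Type u) [AddCommGroup M] [Module A M] : Type u where
  b : ℕ → ℕ
  d : (n : ℕ) → ((Fin (b (n + 1)) → A) →ₗ[A] (Fin (b n) → A))
  aug : (Fin (b 0) → A) →ₗ[A] M
  aug_surjective : Function.Surjective aug
  exact_zero : Function.Exact (d 0) aug
  exact_succ : ∀ n, Function.Exact (d (n + 1)) (d n)
  minimal : ∀ n x i, d n x i ∈ maximalIdeal A

variable (M : Type u) [AddCommGroup M] [Module A M]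

def HasComplexityLE (t : ℕ) : Prop :=
  ∃ (R : MinFreeRes A M) (a : ℝ), ∀ᶠ n : ℕ in atTop, (R.b n : ℝ) ≤ a * (n : ℝ) ^ ((t : ℤ) - 1)

noncomputable def complexity : ℕ∞ :=
  sInf {c : ℕ∞ | ∃ t : ℕ, c = t ∧ HasComplexityLE A M t}

def HasProjDimLE (t : ℕ) : Prop :=
  ∃ R : MinFreeRes A M, ∀ i, t < i → R.b i = 0

noncomputable def projDim : ℕ∞ :=
  sInf {c : ℕ∞ | ∃ t : ℕ, c = t ∧ HasProjDimLE A M t}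

def HasFiniteProjDim : Prop :=
  ∃ t : ℕ, HasProjDimLE A M t

def IsSyzygyOf (S : Type u) [AddCommGroup S] [Module A S] : ℕ → Prop
  | 0 => Nonempty (S ≃ₗ[A] M)
  | 1 => ∃ R : MinFreeRes A M, Nonempty (S ≃ₗ[A] (LinearMap.ker R.aug))
  | (n + 2) => ∃ R : MinFreeRes A M, Nonempty (S ≃ₗ[A] (LinearMap.ker (R.d n)))

variable {A M} in
def IsSES {K S : Type u} [AddCommGroup K] [Module A K] [AddCommGroup S] [Module A S]
    (f : M →ₗ[A] K) (g : K →ₗ[A] S) : Prop :=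
  Function.Injective f ∧ Function.Exact f g ∧ Function.Surjective g

noncomputable def extModule (n : ℕ) (N : Type u) [AddCommGroup N] [Module A N] :
    ModuleCat A :=
  ((_root_.Ext A (ModuleCat.{u} A) n).obj (op (ModuleCat.of A M))).obj (ModuleCat.of A N)

def extVanish (n : ℕ) (N : Type u) [AddCommGroup N] [Module A N] : Prop :=
  Subsingleton (extModule A M n N)

/-- The `n`-th Tor module `Tor^A_n(M, N)`. -/
noncomputable def torModule (n : ℕ) (N : Type u) [AddCommGroup N] [Module A N] :
    ModuleCat A :=
  ((Tor (ModuleCat.{u} A) n).obj (ModuleCat.of A M)).obj (ModuleCat.of A N)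

/-- The vanishing `Tor^A_n(M, N) = 0`. -/
def torVanish (n : ℕ) (N : Type u) [AddCommGroup N] [Module A N] : Prop :=
  Subsingleton (torModule A M n N)

noncomputable def depth : ℕ∞ :=
  sInf {c : ℕ∞ | ∃ i : ℕ, c = i ∧ ¬ extVanish A (ResidueField A) i M}

variable {A}

/-- The category of modules of *free reducible complexity* over the local ring `A`.
It is defined inductively: every finitely generated module of finite projective
dimension has free reducible complexity, and a finitely generated module `M` of finite
positive complexity has free reducible complexity provided there is a short exact
sequence `0 → M → K → Ω^n_A(M) → 0` (necessarily induced by a cohomology element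
`η ∈ Ext^{n+1}_A(M,M)`) where `K` is a finitely generated module of free reducible
complexity with `cx K = cx M - 1`. -/
inductive HasFreeRedCxCat : ModuleCat.{u} A → Prop
  | of_finite_projDim (M : ModuleCat.{u} A) (hfg : Module.Finite A M)
      (h : HasFiniteProjDim A M) : HasFreeRedCxCat M
  | step (M K S : ModuleCat.{u} A) (n : ℕ)
      (hfg : Module.Finite A M) (hKfg : Module.Finite A K)
      (hpos : 0 < complexity A M) (hfin : complexity A M ≠ ⊤)
      (hsyz : IsSyzygyOf A M S n)
      (f : M →ₗ[A] K) (g : K →ₗ[A] S) (hses : IsSES f g)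
      (hcx : complexity A K = complexity A M - 1)
      (hK : HasFreeRedCxCat K) : HasFreeRedCxCat M

/-- The category of modules of *reducible complexity* over the local ring `A`: as for
free reducible complexity, but where in addition the reductions are required to
preserve depth. -/
inductive HasRedCxCat : ModuleCat.{u} A → Prop
  | of_finite_projDim (M : ModuleCat.{u} A) (hfg : Module.Finite A M)
      (h : HasFiniteProjDim A M) : HasRedCxCat M
  | step (M K S : ModuleCat.{u} A) (n : ℕ)
      (hfg : Module.Finite A M) (hKfg : Module.Finite A K)
      (hpos : 0 < complexity A M) (hfin : complexity A M ≠ ⊤)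
      (hsyz : IsSyzygyOf A M S n)
      (f : M →ₗ[A] K) (g : K →ₗ[A] S) (hses : IsSES f g)
      (hcx : complexity A K = complexity A M - 1)
      (hdepth : depth A K = depth A M)
      (hK : HasRedCxCat K) : HasRedCxCat M

variable (A)

/-- `M` has free reducible complexity. -/
def HasFreeRedCx (M : Type u) [AddCommGroup M] [Module A M] : Prop :=
  HasFreeRedCxCat (ModuleCat.of A M)

/-- `M` has reducible complexity. -/
def HasRedCx (M : Type u) [AddCommGroup M] [Module A M] : Prop :=
  HasRedCxCat (ModuleCat.of A M)

/-- A Noetherian local ring is Gorenstein if it has finite injective dimension over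
itself; by Bass' characterization, this is equivalent to the vanishing of
`Ext^i_A(k, A)` for all sufficiently large `i`. -/
def IsGorenstein : Prop :=
  ∃ n : ℕ, ∀ i : ℕ, n < i → extVanish A (ResidueField A) i A

end ComplexityTest

open ComplexityTest

namespace ComplexityTest

/-- vanishing of the derived-category `Ext`. -/
def VExt (A : Type u) [CommRing A] (M N : Type u) [AddCommGroup M] [Module A M]
    [AddCommGroup N] [Module A N] (n : ℕ) : Prop :=
  Subsingleton (Abelian.Ext (ModuleCat.of A M) (ModuleCat.of A N) n)

theorem abExt_subsingleton_iff {A : Type u} [CommRing A] {X : ModuleCat.{u} A}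
    (P : ProjectiveResolution X) (Y : ModuleCat.{u} A) (n : ℕ) :
    Subsingleton (Abelian.Ext X Y (n + 1)) ↔
      ∀ f : P.complex.X (n + 1) ⟶ Y, P.complex.d (n + 2) (n + 1) ≫ f = 0 →
        ∃ g : P.complex.X n ⟶ Y, P.complex.d (n + 1) n ≫ g = f := by
  constructor
  · intro h f hf
    rw [← P.extMk_eq_zero_iff f (n + 2) rfl hf n rfl]
    exact Subsingleton.elim _ _
  · intro h
    refine subsingleton_of_forall_eq 0 fun x => ?_
    obtain ⟨f, hf, rfl⟩ := P.extMk_surjective x (n + 2) rfl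
    rw [P.extMk_eq_zero_iff f (n + 2) rfl hf n rfl]
    exact h f hf

theorem abExt_zero_subsingleton_iff {A : Type u} [CommRing A] {X : ModuleCat.{u} A}
    (P : ProjectiveResolution X) (Y : ModuleCat.{u} A) :
    Subsingleton (Abelian.Ext X Y 0) ↔
      ∀ f : P.complex.X 0 ⟶ Y, P.complex.d 1 0 ≫ f = 0 → f = 0 := by
  rw [Abelian.Ext.addEquiv₀.subsingleton_congr]
  constructor
  · intro h f hf
    have h1 := P.exact₀.g_desc f hf
    have h2 : P.exact₀.desc f hf = 0 := h.elim (P.exact₀.desc f hf : X ⟶ Y) 0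
    rw [← h1, h2, Limits.comp_zero]
  · intro h
    refine subsingleton_of_forall_eq 0 fun x => ?_
    obtain ⟨q, hq, he⟩ : ∃ q : P.complex.X 0 ⟶ X, P.complex.d 1 0 ≫ q = 0 ∧ Epi q :=
      ⟨P.π.f 0, P.complex_d_comp_π_f_zero, inferInstanceAs (Epi (P.π.f 0))⟩
    have h1 := h (q ≫ x) (by rw [← Category.assoc, hq, Limits.zero_comp])
    rw [← cancel_epi q, h1, Limits.comp_zero]

theorem extVanish_aux {A : Type u} [CommRing A] {X : ModuleCat.{u} A}
    (P : ProjectiveResolution X) (Y : ModuleCat.{u} A) (i j k : ℕ)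
    (hi : (ComplexShape.up ℕ).prev j = i) (hk : (ComplexShape.up ℕ).next j = k) :
    Subsingleton (((_root_.Ext A (ModuleCat.{u} A) j).obj (op X)).obj Y) ↔
      ∀ f : P.complex.X j ⟶ Y, P.complex.d k j ≫ f = 0 →
        ∃ g : P.complex.X i ⟶ Y, P.complex.d j i ≫ g = f := by
  rw [← ModuleCat.isZero_iff_subsingleton, (P.isoExt (R := A) j Y).isZero_iff,
    ← HomologicalComplex.exactAt_iff_isZero_homology,
    HomologicalComplex.exactAt_iff' _ i j k hi hk, ShortComplex.moduleCat_exact_iff]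
  exact Iff.rfl

theorem extVanish_iff (A : Type u) [CommRing A] [IsLocalRing A]
    (M N : Type u) [AddCommGroup M] [Module A M]
    [AddCommGroup N] [Module A N] (n : ℕ) :
    extVanish A M n N ↔ VExt A M N n := by
  let P := projectiveResolution (ModuleCat.of A M)
  unfold extVanish extModule VExt
  cases n with
  | zero =>
    rw [abExt_zero_subsingleton_iff P, extVanish_aux P _ 0 0 1 (by simp) (by simp)]
    refine forall_congr' fun f => imp_congr_right fun _ => ?_
    simp [eq_comm]
  | succ n =>
    rw [abExt_subsingleton_iff P, extVanish_aux P _ n (n+1) (n+2) (by simp) (by simp)]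

section
variable {A : Type u} [CommRing A]
  {X Y Z N : Type u} [AddCommGroup X] [Module A X] [AddCommGroup Y] [Module A Y]
  [AddCommGroup Z] [Module A Z] [AddCommGroup N] [Module A N]

theorem VExt.congr (e : X ≃ₗ[A] Y) {n : ℕ} (h : VExt A X N n) : VExt A Y N n := by
  refine subsingleton_of_forall_eq 0 fun x => ?_
  have : x = (Abelian.Ext.mk₀ e.toModuleIso.inv).comp
      ((Abelian.Ext.mk₀ e.toModuleIso.hom).comp x (zero_add n)) (zero_add n) := by
    rw [Abelian.Ext.mk₀_comp_mk₀_assoc, Iso.inv_hom_id, Abelian.Ext.mk₀_id_comp]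
  rw [this, h.elim ((Abelian.Ext.mk₀ e.toModuleIso.hom).comp x (zero_add n)) 0]
  simp

theorem VExt.congr_right (e : X ≃ₗ[A] Y) {n : ℕ} (h : VExt A N X n) : VExt A N Y n := by
  refine subsingleton_of_forall_eq 0 fun x => ?_
  have : x = (x.comp (Abelian.Ext.mk₀ e.toModuleIso.inv) (add_zero n)).comp
      (Abelian.Ext.mk₀ e.toModuleIso.hom) (add_zero n) := by
    rw [Abelian.Ext.comp_assoc_of_second_deg_zero, Abelian.Ext.mk₀_comp_mk₀, Iso.inv_hom_id,
      Abelian.Ext.comp_mk₀_id]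
  rw [this, h.elim (x.comp (Abelian.Ext.mk₀ e.toModuleIso.inv) (add_zero n)) 0]
  simp

theorem VExt.of_subsingleton [Subsingleton X] (n : ℕ) : VExt A X N n := by
  refine subsingleton_of_forall_eq 0 fun x => ?_
  have : (𝟙 (ModuleCat.of A X)) = 0 := by
    ext a; exact Subsingleton.elim (α := X) _ _
  rw [← Abelian.Ext.mk₀_id_comp x, this]
  simp

theorem VExt.of_projective [Module.Projective A X] (n : ℕ) : VExt A X N (n + 1) := by
  have : Projective (ModuleCat.of A X) := by
    rw [← IsProjective.iff_projective]; infer_instance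
  exact subsingleton_of_forall_eq 0 fun x => Abelian.Ext.eq_zero_of_projective _

/-- The short complex of a short exact sequence. -/
def IsSES.sc {f : X →ₗ[A] Y} {g : Y →ₗ[A] Z} (h : IsSES f g) : ShortComplex (ModuleCat.{u} A) :=
  ShortComplex.mk (ModuleCat.ofHom f) (ModuleCat.ofHom g) (by
    ext x; exact h.2.1.apply_apply_eq_zero x)

theorem IsSES.shortExact {f : X →ₗ[A] Y} {g : Y →ₗ[A] Z} (h : IsSES f g) :
    h.sc.ShortExact where
  exact := (ShortComplex.ShortExact.moduleCat_exact_iff_function_exact _).mpr h.2.1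
  mono_f := (ModuleCat.mono_iff_injective _).mpr h.1
  epi_g := (ModuleCat.epi_iff_surjective _).mpr h.2.2

theorem IsSES.mid {f : X →ₗ[A] Y} {g : Y →ₗ[A] Z} (h : IsSES f g) {n : ℕ}
    (h3 : VExt A Z N n) (h1 : VExt A X N n) : VExt A Y N n := by
  refine subsingleton_of_forall_eq 0 fun x => ?_
  obtain ⟨y, rfl⟩ := Abelian.Ext.contravariant_sequence_exact₂ h.shortExact (ModuleCat.of A N) x
    (h1.elim _ _)
  rw [show y = 0 from h3.elim _ _]; simp; rfl

theorem IsSES.left {f : X →ₗ[A] Y} {g : Y →ₗ[A] Z} (h : IsSES f g) {n : ℕ}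
    (h2 : VExt A Y N n) (h3 : VExt A Z N (n + 1)) : VExt A X N n := by
  refine subsingleton_of_forall_eq 0 fun x => ?_
  obtain ⟨y, rfl⟩ := Abelian.Ext.contravariant_sequence_exact₁ h.shortExact (ModuleCat.of A N) x
    (add_comm 1 n) (h3.elim _ _)
  rw [show y = 0 from h2.elim _ _]; simp; rfl

theorem IsSES.right {f : X →ₗ[A] Y} {g : Y →ₗ[A] Z} (h : IsSES f g) {n : ℕ}
    (h1 : VExt A X N n) (h2 : VExt A Y N (n + 1)) : VExt A Z N (n + 1) := by
  refine subsingleton_of_forall_eq 0 fun x => ?_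
  obtain ⟨y, rfl⟩ := Abelian.Ext.contravariant_sequence_exact₃ h.shortExact (ModuleCat.of A N) x
    (h2.elim _ _) (add_comm 1 n)
  rw [show y = 0 from h1.elim _ _]; simp; rfl

end

theorem isSES_ker {A : Type u} [CommRing A]
    {Y Z : Type u} [AddCommGroup Y] [Module A Y]
    [AddCommGroup Z] [Module A Z] {g : Y →ₗ[A] Z} (h : Function.Surjective g) :
    IsSES (LinearMap.ker g).subtype g :=
  ⟨Subtype.val_injective, fun x => by simp, h⟩

end ComplexityTest

namespace ComplexityTest

set_option linter.unusedSectionVars false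

section
variable {A : Type u} [CommRing A] [IsLocalRing A]
  {M : Type u} [AddCommGroup M] [Module A M]

/-- The truncated resolution. -/
def MinFreeRes.shift (R : MinFreeRes A M) : MinFreeRes A (LinearMap.ker R.aug) where
  b n := R.b (n + 1)
  d n := R.d (n + 1)
  aug := (R.d 0).codRestrict _ (fun x => R.exact_zero.apply_apply_eq_zero x)
  aug_surjective := by
    rintro ⟨y, hy⟩
    obtain ⟨x, rfl⟩ := (R.exact_zero y).1 hy
    exact ⟨x, rfl⟩
  exact_zero := by
    intro y
    exact Subtype.ext_iff.trans (R.exact_succ 0 y)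
  exact_succ n := R.exact_succ (n + 1)
  minimal n := R.minimal (n + 1)

theorem MinFreeRes.ses (R : MinFreeRes A M) : IsSES (LinearMap.ker R.aug).subtype R.aug :=
  isSES_ker R.aug_surjective

theorem MinFreeRes.vext_ker_aug (R : MinFreeRes A M) (N : Type u) [AddCommGroup N] [Module A N]
    (i : ℕ) (hi : 1 ≤ i) : VExt A (LinearMap.ker R.aug) N i ↔ VExt A M N (i + 1) := by
  obtain ⟨i, rfl⟩ := Nat.exists_eq_add_of_le' hi
  exact ⟨fun h => R.ses.right h (.of_projective _), fun h => R.ses.left (.of_projective _) h⟩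

theorem MinFreeRes.vext_ker_d (N : Type u) [AddCommGroup N] [Module A N]
    (i : ℕ) (hi : 1 ≤ i) (n : ℕ) :
    ∀ {M : Type u} [AddCommGroup M] [Module A M] (R : MinFreeRes A M),
    VExt A (LinearMap.ker (R.d n)) N i ↔ VExt A M N (i + (n + 2)) := by
  induction n with
  | zero =>
    intro M _ _ R
    have e : LinearMap.ker (R.d 0) ≃ₗ[A] LinearMap.ker R.shift.aug :=
      LinearEquiv.ofEq _ _ (by
        ext x
        exact (Subtype.ext_iff (a1 := R.shift.aug x) (a2 := 0)).symm)
    rw [show i + (0 + 2) = (i + 1) + 1 by omega, ← R.vext_ker_aug N (i + 1) (by omega),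
      ← R.shift.vext_ker_aug N i hi]
    exact ⟨fun h => h.congr e, fun h => h.congr e.symm⟩
  | succ n ih =>
    intro M _ _ R
    rw [show i + (n + 1 + 2) = (i + (n + 2)) + 1 by omega,
      ← R.vext_ker_aug N (i + (n + 2)) (by omega), ← ih R.shift]
    rfl

theorem IsSyzygyOf.vext_iff {S : Type u} [AddCommGroup S] [Module A S] {n : ℕ}
    (h : IsSyzygyOf A M S n) (N : Type u) [AddCommGroup N] [Module A N]
    (i : ℕ) (hi : 1 ≤ i) : VExt A S N i ↔ VExt A M N (i + n) := by
  match n, h with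
  | 0, h =>
    obtain ⟨e⟩ := h
    exact ⟨fun h => h.congr e, fun h => h.congr e.symm⟩
  | 1, h =>
    obtain ⟨R, ⟨e⟩⟩ := h
    rw [← R.vext_ker_aug N i hi]
    exact ⟨fun h => h.congr e, fun h => h.congr e.symm⟩
  | n + 2, h =>
    obtain ⟨R, ⟨e⟩⟩ := h
    rw [← R.vext_ker_d N i hi]
    exact ⟨fun h => h.congr e, fun h => h.congr e.symm⟩

theorem MinFreeRes.subsingleton (R : MinFreeRes A M) (h : R.b 0 = 0) : Subsingleton M := by
  have : IsEmpty (Fin (R.b 0)) := by rw [h]; infer_instance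
  exact R.aug_surjective.subsingleton

theorem MinFreeRes.vext_of_zero (N : Type u) [AddCommGroup N] [Module A N] (p : ℕ) :
    ∀ {M : Type u} [AddCommGroup M] [Module A M] (R : MinFreeRes A M)
      (_ : ∀ j, p ≤ j → R.b j = 0) (i : ℕ) (_ : p ≤ i), VExt A M N i := by
  induction p with
  | zero =>
    intro M _ _ R h i _
    have := R.subsingleton (h 0 le_rfl)
    exact .of_subsingleton i
  | succ p ih =>
    intro M _ _ R h i hi
    obtain ⟨i, rfl⟩ := Nat.exists_eq_add_of_le' (show 1 ≤ i by omega)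
    exact R.ses.right (ih R.shift (fun j hj => h (j + 1) (by omega)) i (by omega))
      (.of_projective _)

theorem smul_ext_residue {Y : ModuleCat.{u} A} {i : ℕ}
    (x : Abelian.Ext (ModuleCat.of A (ResidueField A)) Y i) (r : A) (hr : r ∈ maximalIdeal A) :
    r • x = 0 := by
  have h0 : r • 𝟙 (ModuleCat.of A (ResidueField A)) = 0 := by
    ext (a : ResidueField A)
    change r • a = 0
    rw [Algebra.smul_def]
    have : algebraMap A (ResidueField A) r = 0 := (residue_eq_zero_iff r).2 hr
    rw [this, zero_mul]
  have : r • x = (Abelian.Ext.mk₀ (r • 𝟙 (ModuleCat.of A (ResidueField A)))).comp x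
      (zero_add i) := by
    simp [Abelian.Ext.mk₀_smul]
  rw [this, h0]; simp

theorem ext_pi_eq_zero {X : ModuleCat.{u} A} {m : ℕ} {i : ℕ}
    (x : Abelian.Ext X (ModuleCat.of A (Fin m → A)) i)
    (h : ∀ j, x.comp (Abelian.Ext.mk₀ (ModuleCat.ofHom (LinearMap.proj j))) (add_zero i) =
      (0 : Abelian.Ext X (ModuleCat.of A A) i)) : x = 0 := by
  have key : 𝟙 (ModuleCat.of A (Fin m → A)) =
      ∑ j, (ModuleCat.ofHom (LinearMap.proj j) : ModuleCat.of A (Fin m → A) ⟶ ModuleCat.of A A) ≫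
        ModuleCat.ofHom (LinearMap.single A (fun _ => A) j) := by
    ext1
    refine LinearMap.ext fun v => ?_
    simp only [ModuleCat.hom_sum, ModuleCat.hom_comp, LinearMap.sum_apply]
    exact (Finset.univ_sum_single v).symm
  rw [← Abelian.Ext.comp_mk₀_id x, key, Abelian.Ext.mk₀_sum, Abelian.Ext.comp_sum]
  refine Finset.sum_eq_zero fun j _ => ?_
  rw [← Abelian.Ext.mk₀_comp_mk₀, ← Abelian.Ext.comp_assoc_of_second_deg_zero, h]
  simp

theorem vext_pi {X : Type u} [AddCommGroup X] [Module A X] {i : ℕ} (m : ℕ)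
    (h : VExt A X A i) : VExt A X (Fin m → A) i :=
  subsingleton_of_forall_eq 0 fun x => ext_pi_eq_zero x fun _ => h.elim _ _

theorem vext_of_pi {X : Type u} [AddCommGroup X] [Module A X] {i : ℕ} {m : ℕ} (hm : m ≠ 0)
    (h : VExt A X (Fin m → A) i) : VExt A X A i := by
  refine subsingleton_of_forall_eq 0 fun x => ?_
  let j : Fin m := ⟨0, by omega⟩
  have key : (ModuleCat.ofHom (LinearMap.single A (fun _ => A) j) :
      ModuleCat.of A A ⟶ ModuleCat.of A (Fin m → A)) ≫
        ModuleCat.ofHom (LinearMap.proj j) = 𝟙 (ModuleCat.of A A) := by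
    ext; simp
  rw [← Abelian.Ext.comp_mk₀_id x, ← key, ← Abelian.Ext.mk₀_comp_mk₀,
    ← Abelian.Ext.comp_assoc_of_second_deg_zero,
    h.elim (x.comp (Abelian.Ext.mk₀ _) (add_zero i)) 0]
  simp

theorem ext_comp_minimal {a b i : ℕ} (φ : (Fin a → A) →ₗ[A] (Fin b → A))
    (hφ : ∀ v j, φ v j ∈ maximalIdeal A)
    (x : Abelian.Ext (ModuleCat.of A (ResidueField A)) (ModuleCat.of A (Fin a → A)) i) :
    x.comp (Abelian.Ext.mk₀ (ModuleCat.ofHom φ)) (add_zero i) = 0 := by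
  refine ext_pi_eq_zero _ fun j => ?_
  have key : ModuleCat.ofHom φ ≫ (ModuleCat.ofHom (LinearMap.proj j) :
      ModuleCat.of A (Fin b → A) ⟶ ModuleCat.of A A) =
      ∑ l : Fin a, (φ (Pi.single l 1) j) • (ModuleCat.ofHom (LinearMap.proj l) :
        ModuleCat.of A (Fin a → A) ⟶ ModuleCat.of A A) := by
    ext1
    refine LinearMap.ext fun v => ?_
    simp only [ModuleCat.hom_sum, ModuleCat.hom_comp, LinearMap.sum_apply]
    change φ v j = ∑ l : Fin a, φ (Pi.single l 1) j * v l
    conv_lhs => rw [← Finset.univ_sum_single v, map_sum, Finset.sum_apply]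
    refine Finset.sum_congr rfl fun l _ => ?_
    have h1 : (Pi.single l (v l) : Fin a → A) = v l • Pi.single l 1 := by
      rw [← Pi.single_smul, smul_eq_mul, mul_one]
    rw [h1, map_smul, Pi.smul_apply, smul_eq_mul, mul_comm]
  rw [Abelian.Ext.comp_assoc_of_second_deg_zero, Abelian.Ext.mk₀_comp_mk₀, key,
    Abelian.Ext.mk₀_sum, Abelian.Ext.comp_sum]
  refine Finset.sum_eq_zero fun l _ => ?_
  rw [Abelian.Ext.mk₀_smul, Abelian.Ext.comp_smul]
  exact smul_ext_residue _ _ (hφ _ _)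

theorem ext_comp_of_equiv {L X Y Z : Type u} [AddCommGroup L] [Module A L]
    [AddCommGroup X] [Module A X] [AddCommGroup Y] [Module A Y]
    [AddCommGroup Z] [Module A Z] {i : ℕ} (e : X ≃ₗ[A] Y) (f : Y →ₗ[A] Z)
    (h : ∀ x : Abelian.Ext (ModuleCat.of A L) (ModuleCat.of A X) i,
      x.comp (Abelian.Ext.mk₀ (ModuleCat.ofHom (f.comp e.toLinearMap))) (add_zero i) = 0)
    (x : Abelian.Ext (ModuleCat.of A L) (ModuleCat.of A Y) i) :
    x.comp (Abelian.Ext.mk₀ (ModuleCat.ofHom f)) (add_zero i) = 0 := by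
  have h1 : ModuleCat.ofHom f =
      ModuleCat.ofHom e.symm.toLinearMap ≫ ModuleCat.ofHom (f.comp e.toLinearMap) := by
    ext y; simp
  rw [h1, ← Abelian.Ext.mk₀_comp_mk₀, ← Abelian.Ext.comp_assoc_of_second_deg_zero]
  exact h _

theorem IsSES.cov_left {L X Y Z : Type u} [AddCommGroup L] [Module A L]
    [AddCommGroup X] [Module A X] [AddCommGroup Y] [Module A Y]
    [AddCommGroup Z] [Module A Z] {i : ℕ} {f : X →ₗ[A] Y} {g : Y →ₗ[A] Z} (h : IsSES f g)
    (hz : ∀ x : Abelian.Ext (ModuleCat.of A L) (ModuleCat.of A X) i,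
      x.comp (Abelian.Ext.mk₀ (ModuleCat.ofHom f)) (add_zero i) = 0)
    (hv : ¬ VExt A L X i) : ∃ j, j + 1 = i ∧ ¬ VExt A L Z j := by
  cases i with
  | zero =>
    exfalso
    refine hv (subsingleton_of_forall_eq 0 fun x => ?_)
    have : Mono (ModuleCat.ofHom f) := h.shortExact.mono_f
    apply Abelian.Ext.postcomp_mk₀_injective_of_mono _ (ModuleCat.ofHom f)
    rw [map_zero]
    exact hz x
  | succ i =>
    refine ⟨i, by omega, fun hM => hv (subsingleton_of_forall_eq 0 fun x => ?_)⟩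
    obtain ⟨y, rfl⟩ := Abelian.Ext.covariant_sequence_exact₁ _ h.shortExact x (hz x) rfl
    rw [show y = 0 from hM.elim _ _]
    simp; rfl

/-- Half of Auslander-Buchsbaum. -/
theorem auslander_buchsbaum {d : ℕ} (hlt : ∀ i < d, VExt A (ResidueField A) A i)
    (hd : ¬ VExt A (ResidueField A) A d) (p : ℕ) :
    ∀ {M : Type u} [AddCommGroup M] [Module A M] (R : MinFreeRes A M)
      (_ : R.b p ≠ 0) (_ : ∀ j, p < j → R.b j = 0),
      ∃ i, i + p = d ∧ ¬ VExt A (ResidueField A) M i := by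
  induction p with
  | zero =>
    intro M _ _ R h0 h
    refine ⟨d, rfl, fun hv => hd (vext_of_pi h0 (hv.congr_right ?_))⟩
    have := R.shift.subsingleton (h 1 (by omega))
    refine (LinearEquiv.ofBijective R.aug ⟨?_, R.aug_surjective⟩).symm
    rw [← LinearMap.ker_eq_bot]
    exact Submodule.eq_bot_of_subsingleton
  | succ p ih =>
    intro M _ _ R h0 h
    obtain ⟨i, hi, hv⟩ := ih R.shift h0 (fun j hj => h (j + 1) (by omega))
    have hz : ∀ x : Abelian.Ext (ModuleCat.of A (ResidueField A))
        (ModuleCat.of A (LinearMap.ker R.aug)) i,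
        x.comp (Abelian.Ext.mk₀ (ModuleCat.ofHom (LinearMap.ker R.aug).subtype)) (add_zero i) =
          0 := by
      intro x
      rcases Nat.eq_zero_or_pos p with rfl | hp
      · have := R.shift.shift.subsingleton (h 2 (by omega))
        have hbij : Function.Bijective R.shift.aug := by
          refine ⟨?_, R.shift.aug_surjective⟩
          rw [← LinearMap.ker_eq_bot]
          exact Submodule.eq_bot_of_subsingleton
        let e : (Fin (R.b 1) → A) ≃ₗ[A] LinearMap.ker R.aug :=
          LinearEquiv.ofBijective R.shift.aug hbij
        have hcomp : (LinearMap.ker R.aug).subtype.comp e.toLinearMap = R.d 0 :=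
          LinearMap.ext fun _ => rfl
        refine ext_comp_of_equiv e _ (fun y => ?_) x
        rw [hcomp]
        exact ext_comp_minimal (R.d 0) (R.minimal 0) y
      · exact (vext_pi (R.b 0) (hlt i (by omega))).elim _ _
    obtain ⟨j, rfl, hj⟩ := R.ses.cov_left hz hv
    exact ⟨j, by omega, hj⟩

end

end ComplexityTest

namespace ComplexityTest

theorem exists_not_vext (A : Type u) [CommRing A] [IsLocalRing A] [IsNoetherianRing A] :
    ∃ i, ¬ VExt A (ResidueField A) A i := by
  by_contra! hcon
  have hlt : maximalIdeal A • (⊤ : Submodule A (ModuleCat.of A A)) < ⊤ := by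
    rw [lt_top_iff_ne_top]
    intro h
    have h2 : maximalIdeal A = ⊤ := by
      have : maximalIdeal A • (⊤ : Submodule A A) = ⊤ := h
      simpa using this
    exact Ideal.IsPrime.ne_top' h2
  have hsupp : Module.support A (ModuleCat.of A (ResidueField A)) =
      PrimeSpectrum.zeroLocus (maximalIdeal A) := by
    change Module.support A (A ⧸ maximalIdeal A) = _
    rw [Module.support_eq_zeroLocus, Ideal.annihilator_quotient]
  have : Module.Finite A (ModuleCat.of A (ResidueField A)) :=
    inferInstanceAs (Module.Finite A (A ⧸ maximalIdeal A))
  have hle : ∀ n : ℕ, (n : WithBot ℕ∞) ≤ ringKrullDim A := by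
    intro n
    obtain ⟨rs, hlen, hmem, hreg⟩ := ModuleCat.exists_isRegular_of_exists_subsingleton_ext
      (maximalIdeal A) n (ModuleCat.of A A) hlt (ModuleCat.of A (ResidueField A)) hsupp
      (fun i _ => hcon i)
    have h1 := ringKrullDim_add_length_eq_ringKrullDim_of_isRegular rs hreg
    have : Nontrivial (A ⧸ Ideal.ofList rs) := by
      apply Ideal.Quotient.nontrivial_iff.2
      intro h
      apply hreg.2
      rw [h]
      exact (Submodule.top_smul _).symm
    have h0 : 0 ≤ ringKrullDim (A ⧸ Ideal.ofList rs) := ringKrullDim_nonneg_of_nontrivial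
    rw [← h1, hlen]
    exact le_add_of_nonneg_left h0
  have hne := ringKrullDim_lt_top (R := A)
  obtain ⟨n, hn⟩ : ∃ n : ℕ, ringKrullDim A = n := by
    have h0 := hle 0
    generalize ringKrullDim A = x at *
    induction x with
    | bot => simp at h0
    | coe x =>
      induction x with
      | top => exact absurd hne (lt_irrefl _)
      | coe x => exact ⟨x, rfl⟩
  have := hle (n + 1)
  rw [hn] at this
  have : n + 1 ≤ n := by exact_mod_cast this
  omega

theorem depth_le {A : Type u} [CommRing A] [IsLocalRing A]
    {M : Type u} [AddCommGroup M] [Module A M] {i : ℕ}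
    (h : ¬ VExt A (ResidueField A) M i) : depth A M ≤ i :=
  sInf_le ⟨i, rfl, fun h' => h ((extVanish_iff _ _ _ _).1 h')⟩

theorem depth_eq {A : Type u} [CommRing A] [IsLocalRing A]
    {M : Type u} [AddCommGroup M] [Module A M] {d : ℕ}
    (hlt : ∀ i < d, VExt A (ResidueField A) M i)
    (h : ¬ VExt A (ResidueField A) M d) : depth A M = d := by
  refine le_antisymm (depth_le h) (le_sInf ?_)
  rintro _ ⟨i, rfl, hi⟩
  rw [extVanish_iff] at hi
  by_contra hc
  exact hi (hlt i (by exact_mod_cast not_le.1 hc))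

theorem exists_res_of_complexity {A : Type u} [CommRing A] [IsLocalRing A]
    {M : Type u} [AddCommGroup M] [Module A M] (h : complexity A M = 0) :
    ∃ (R : MinFreeRes A M) (p : ℕ), ∀ j, p ≤ j → R.b j = 0 := by
  have hne : {c : ℕ∞ | ∃ t : ℕ, c = t ∧ HasComplexityLE A M t}.Nonempty := by
    by_contra hc
    rw [Set.not_nonempty_iff_eq_empty] at hc
    rw [complexity, hc, sInf_empty] at h
    simp at h
  have hm := csInf_mem hne
  obtain ⟨t, ht, R, a, ha⟩ := hm
  have : t = 0 := by
    have h' : (t : ℕ∞) = 0 := ht.symm.trans h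
    exact_mod_cast h'
  subst this
  obtain ⟨p, hp⟩ := Filter.eventually_atTop.1 ha
  obtain ⟨q, hq⟩ := exists_nat_gt a
  refine ⟨R, max (max p q) 1, fun j hj => ?_⟩
  have h1 := hp j (by omega)
  have hj0 : (0 : ℝ) < j := by exact_mod_cast (show 0 < j by omega)
  have hqj : (q : ℝ) ≤ j := by exact_mod_cast (show q ≤ j by omega)
  have h2 : a * (j : ℝ) ^ (((0 : ℕ) : ℤ) - 1) < 1 := by
    have : (((0 : ℕ) : ℤ) - 1) = -1 := by norm_num
    rw [this, zpow_neg_one, ← div_eq_mul_inv, div_lt_one hj0]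
    linarith
  have h3 : (R.b j : ℝ) < 1 := lt_of_le_of_lt h1 h2
  have : R.b j < 1 := by exact_mod_cast h3
  omega

theorem vext_of_complexity_zero {A : Type u} [CommRing A] [IsLocalRing A] [IsNoetherianRing A]
    {M : Type u} [AddCommGroup M] [Module A M] (h : complexity A M = 0)
    {B : ℕ} (hB : depth A A - depth A M ≤ (B : ℕ∞))
    (N : Type u) [AddCommGroup N] [Module A N] (i : ℕ) (hi : B < i) : VExt A M N i := by
  classical
  obtain ⟨R, hp⟩ := exists_res_of_complexity h
  have hspec := Nat.find_spec hp
  have hmin := fun m => Nat.find_min hp (m := m)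
  generalize Nat.find hp = p at hspec hmin
  cases p with
  | zero => exact MinFreeRes.vext_of_zero N 0 R hspec i (by omega)
  | succ q =>
    have hq : R.b q ≠ 0 := by
      intro h0
      apply hmin q (by omega)
      intro j hj
      rcases hj.eq_or_lt with rfl | hj
      · exact h0
      · exact hspec j hj
    have hd := exists_not_vext A
    have hds := Nat.find_spec hd
    have hdm : ∀ i < Nat.find hd, VExt A (ResidueField A) A i :=
      fun m hm => not_not.1 (Nat.find_min hd hm)
    generalize Nat.find hd = d at hds hdm
    obtain ⟨k, hk, hv⟩ := auslander_buchsbaum hdm hds q R hq (fun j hj => hspec j hj)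
    have h1 := depth_le hv
    have h2 : (q : ℕ∞) ≤ depth A A - depth A M := by
      rw [depth_eq hdm hds]
      generalize depth A M = x at h1
      induction x with
      | top => simp at h1
      | coe x =>
        have : x ≤ k := by exact_mod_cast h1
        have : q ≤ d - x := by omega
        exact_mod_cast this
    have h3 : q ≤ B := by exact_mod_cast h2.trans hB
    exact MinFreeRes.vext_of_zero N (q + 1) R hspec i (by omega)

theorem depth_ring_finite (A : Type u) [CommRing A] [IsLocalRing A] [IsNoetherianRing A] :
    ∃ d : ℕ, depth A A ≤ d := by
  obtain ⟨i, hi⟩ := exists_not_vext A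
  exact ⟨i, depth_le hi⟩

theorem step_vanish {A : Type u} [CommRing A] [IsLocalRing A]
    {M K S N : Type u} [AddCommGroup M] [Module A M] [AddCommGroup K] [Module A K]
    [AddCommGroup S] [Module A S] [AddCommGroup N] [Module A N] {n m B : ℕ}
    (hsyz : IsSyzygyOf A M S n) {f : M →ₗ[A] K} {g : K →ₗ[A] S} (h : IsSES f g)
    (ih : ∀ t, B < t → (∀ j ≤ m, VExt A K N (t + j)) → ∀ i, B < i → VExt A K N i)
    (t : ℕ) (ht : B < t) (hv : ∀ j ≤ n + m, VExt A M N (t + j)) (i : ℕ) (hi : B < i) :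
    VExt A M N i := by
  have hK : ∀ i, B < i → VExt A K N i := by
    refine ih t ht fun j hj => h.mid ?_ (hv j (by omega))
    rw [hsyz.vext_iff N _ (by omega), add_assoc]
    exact hv (j + n) (by omega)
  -- periodicity
  have down : ∀ i, B < i → VExt A M N (i + 1 + n) → VExt A M N i := by
    intro i hi hv
    refine h.left (hK i hi) ?_
    rwa [hsyz.vext_iff N _ (by omega)]
  have up : ∀ i, B < i → VExt A M N i → VExt A M N (i + 1 + n) := by
    intro i hi hv
    rw [← hsyz.vext_iff N _ (by omega)]
    exact h.right hv (hK _ (by omega))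
  have hup : ∀ j, t ≤ j → VExt A M N j := by
    intro j
    induction j using Nat.strong_induction_on with
    | _ j ihj =>
      intro hj
      by_cases hjn : j ≤ t + n
      · have := hv (j - t) (by omega)
        rwa [show t + (j - t) = j by omega] at this
      · have := up (j - (1 + n)) (by omega) (ihj _ (by omega) (by omega))
        rwa [show j - (1 + n) + 1 + n = j by omega] at this
  have hdown : ∀ k i, B < i → t ≤ i + k → VExt A M N i := by
    intro k
    induction k with
    | zero => intro i _ h2; exact hup i h2
    | succ k ihk =>
      intro i h1 h2
      exact down i h1 (ihk _ (by omega) (by omega))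
  exact hdown t i hi (by omega)

theorem chain_vanish {A : Type u} [CommRing A] [IsLocalRing A] [IsNoetherianRing A]
    (c : ℕ) (K : Fin (c + 1) → Type u) [∀ i, AddCommGroup (K i)] [∀ i, Module A (K i)]
    (S : Fin c → Type u) [∀ i, AddCommGroup (S i)] [∀ i, Module A (S i)]
    (n : Fin c → ℕ)
    (hsyz : ∀ i : Fin c, IsSyzygyOf A (K i.castSucc) (S i) (n i))
    (f : ∀ i : Fin c, K i.castSucc →ₗ[A] K i.succ)
    (g : ∀ i : Fin c, K i.succ →ₗ[A] S i)
    (hses : ∀ i : Fin c, IsSES (f i) (g i))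
    (hlast : complexity A (K (Fin.last c)) = 0)
    (N : Type u) [AddCommGroup N] [Module A N] (B : ℕ)
    (hB : ∀ i, depth A A - depth A (K i) ≤ (B : ℕ∞)) (i : Fin (c + 1)) :
    ∀ t, B < t → (∀ j ≤ ∑ l with i ≤ Fin.castSucc l, n l, VExt A (K i) N (t + j)) →
      ∀ s, B < s → VExt A (K i) N s := by
  induction i using Fin.reverseInduction with
  | last => exact fun _ _ _ s hs => vext_of_complexity_zero hlast (hB _) N s hs
  | cast i ih =>
    have hsum : ∑ l with i.castSucc ≤ Fin.castSucc l, n l =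
        n i + ∑ l with i.succ ≤ Fin.castSucc l, n l := by
      rw [← Finset.sum_insert (by simp)]
      refine Finset.sum_congr ?_ fun _ _ => rfl
      ext l
      simp only [Finset.mem_filter, Finset.mem_univ, true_and, Finset.mem_insert, Fin.le_def,
        Fin.ext_iff, Fin.val_castSucc, Fin.val_succ]
      omega
    rw [hsum]
    exact step_vanish (hsyz i) (hses i) ih

end ComplexityTest

/-- **Proposition 2.3 (cohomology vanishing)**: let `M` be a module of free reducible
complexity `c > 0`, with reduction data `M = K 0, K 1, …, K c`, integers `n 1, …, n c`
and short exact sequences `0 → K (i-1) → K i → Ω^{n i}(K (i-1)) → 0` with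
`cx (K i) = c - i`, and let `b = max_i (depth A - depth (K i))`. Then for any module
`N` the following are equivalent: (i) there is a `t > b` with `Ext^{t+j}(M,N) = 0` for
`0 ≤ j ≤ n 1 + ⋯ + n c`; (ii) `Ext^i(M,N) = 0` for `i ≫ 0`; (iii) `Ext^i(M,N) = 0`
for all `i > b`. -/
theorem extVanishing_of_hasFreeRedCx
    (A : Type u) [CommRing A] [IsLocalRing A] [IsNoetherianRing A]
    (M : Type u) [AddCommGroup M] [Module A M] [Module.Finite A M]
    (hM : HasFreeRedCx A M)
    (c : ℕ) (hcpos : 0 < c) (hcx : complexity A M = c)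
    (K : Fin (c + 1) → Type u) [∀ i, AddCommGroup (K i)] [∀ i, Module A (K i)]
    [∀ i, Module.Finite A (K i)]
    (e : K 0 ≃ₗ[A] M)
    (S : Fin c → Type u) [∀ i, AddCommGroup (S i)] [∀ i, Module A (S i)]
    (n : Fin c → ℕ)
    (hsyz : ∀ i : Fin c, IsSyzygyOf A (K i.castSucc) (S i) (n i))
    (f : ∀ i : Fin c, K i.castSucc →ₗ[A] K i.succ)
    (g : ∀ i : Fin c, K i.succ →ₗ[A] S i)
    (hses : ∀ i : Fin c, IsSES (f i) (g i))
    (hcxK : ∀ i : Fin c, complexity A (K i.succ) = (c : ℕ∞) - ((i : ℕ) + 1))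
    (N : Type u) [AddCommGroup N] [Module A N] [Module.Finite A N] :
    ((∃ t : ℕ, (⨆ i, (depth A A - depth A (K i))) < (t : ℕ∞) ∧
        ∀ j : ℕ, j ≤ ∑ i, n i → extVanish A M (t + j) N) ↔
      (∀ᶠ i in Filter.atTop, extVanish A M i N)) ∧
    ((∀ᶠ i in Filter.atTop, extVanish A M i N) ↔
      (∀ i : ℕ, (⨆ i, (depth A A - depth A (K i))) < (i : ℕ∞) → extVanish A M i N)) := by
  simp only [extVanish_iff]
  obtain ⟨d, hd⟩ := depth_ring_finite A
  have hfin : (⨆ i, (depth A A - depth A (K i))) ≤ (d : ℕ∞) :=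
    iSup_le fun i => tsub_le_self.trans hd
  obtain ⟨B, hB⟩ : ∃ B : ℕ, (⨆ i, (depth A A - depth A (K i))) = (B : ℕ∞) := by
    obtain ⟨B, hB⟩ := ENat.ne_top_iff_exists.1 (ne_top_of_le_ne_top (ENat.coe_ne_top d) hfin)
    exact ⟨B, hB.symm⟩
  have hBi : ∀ i, depth A A - depth A (K i) ≤ (B : ℕ∞) := fun i => by
    rw [← hB]; exact le_iSup (fun i => depth A A - depth A (K i)) i
  have hlast : complexity A (K (Fin.last c)) = 0 := by
    obtain ⟨c, rfl⟩ := Nat.exists_eq_add_of_le' hcpos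
    have := hcxK (Fin.last c)
    rw [Fin.succ_last] at this
    rw [this]
    simp
  have hchain := chain_vanish c K S n hsyz f g hses hlast N B hBi 0
  simp only [Fin.zero_le, Finset.filter_true] at hchain
  rw [hB]
  simp only [Nat.cast_lt]
  have h13 : (∃ t : ℕ, B < t ∧ ∀ j : ℕ, j ≤ ∑ i, n i → VExt A M N (t + j)) →
      ∀ i : ℕ, B < i → VExt A M N i := by
    rintro ⟨t, ht, hv⟩ i hi
    exact (hchain t ht (fun j hj => (hv j hj).congr e.symm) i hi).congr e
  have h21 : (∀ᶠ i in Filter.atTop, VExt A M N i) →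
      ∃ t : ℕ, B < t ∧ ∀ j : ℕ, j ≤ ∑ i, n i → VExt A M N (t + j) := by
    intro h
    obtain ⟨p, hp⟩ := Filter.eventually_atTop.1 h
    exact ⟨max p (B + 1), by omega, fun j _ => hp _ (by omega)⟩
  have h32 : (∀ i : ℕ, B < i → VExt A M N i) → ∀ᶠ i in Filter.atTop, VExt A M N i :=
    fun h => Filter.eventually_atTop.2 ⟨B + 1, fun i hi => h i (by omega)⟩
  exact ⟨⟨fun h => h32 (h13 h), h21⟩, ⟨fun h => h13 (h21 h), h32⟩⟩
end

section
/- Let (A, 𝔪, k) be a commutative Noetherian local ring and let M be a finitely generated A-module having free reducible complexity. Then M has finite projective dimension if and only if Ext^i_A(M,N) = 0 for every finitely generated A-module N having free reducible complexity with cx N = 1 and all i ≫ 0. -/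
open CategoryTheory Opposite Filter IsLocalRing

universe u

open ComplexityTest

section Helpers

open CategoryTheory.Limits Abelian

namespace ComplexityTest

variable {A : Type u} [CommRing A]

/-- The derived-functor `Ext` vanishes in positive degree iff the group `Abelian.Ext` does. -/
lemma extVanish_succ_iff (M N : Type u) [AddCommGroup M] [Module A M]
    [AddCommGroup N] [Module A N] (p : ℕ) :
    extVanish A M (p + 1) N ↔
      Subsingleton (Abelian.Ext (ModuleCat.of A M) (ModuleCat.of A N) (p + 1)) := by
  let P := projectiveResolution (ModuleCat.of A M)
  have h1 : Subsingleton (Abelian.Ext (ModuleCat.of A M) (ModuleCat.of A N) (p + 1)) ↔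
      ∀ f : P.complex.X (p + 1) ⟶ ModuleCat.of A N, P.complex.d (p + 2) (p + 1) ≫ f = 0 →
        ∃ g : P.complex.X p ⟶ ModuleCat.of A N, P.complex.d (p + 1) p ≫ g = f := by
    constructor
    · intro h f hf
      exact (P.extMk_eq_zero_iff f (p + 2) rfl hf p rfl).1 (Subsingleton.elim _ _)
    · intro h
      refine subsingleton_of_forall_eq 0 fun α => ?_
      obtain ⟨f, hf, rfl⟩ := P.extMk_surjective α (p + 2) rfl
      exact (P.extMk_eq_zero_iff f (p + 2) rfl hf p rfl).2 (h f hf)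
  have h2 : extVanish A M (p + 1) N ↔
      ∀ f : P.complex.X (p + 1) ⟶ ModuleCat.of A N, P.complex.d (p + 2) (p + 1) ≫ f = 0 →
        ∃ g : P.complex.X p ⟶ ModuleCat.of A N, P.complex.d (p + 1) p ≫ g = f := by
    unfold extVanish extModule
    rw [← ModuleCat.isZero_iff_subsingleton,
      (P.isoExt (R := A) (p + 1) (ModuleCat.of A N)).isZero_iff,
      ← HomologicalComplex.exactAt_iff_isZero_homology,
      HomologicalComplex.exactAt_iff' _ p (p + 1) (p + 2) (by simp) (by simp),
      ShortComplex.moduleCat_exact_iff]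
    rfl
  rw [h1, h2]

section Lifts

variable {A : Type u} [CommRing A]

/-- Every high degree extension of `X` factors through one fixed class in `Ext^m(X, X')`. -/
def Lifts (X X' : ModuleCat.{u} A) (m p : ℕ) : Prop :=
  ∃ θ : Abelian.Ext X X' m, ∀ i, p ≤ i → ∀ (Y : ModuleCat.{u} A) (x : Abelian.Ext X Y (m + i)),
    ∃ y : Abelian.Ext X' Y i, θ.comp y rfl = x

lemma Lifts.trans {X X' X'' : ModuleCat.{u} A} {m m' p p' q : ℕ}
    (h : Lifts X X' m p) (h' : Lifts X' X'' m' p') (hp : p ≤ q) (hp' : p' ≤ q) :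
    Lifts X X'' (m + m') q := by
  obtain ⟨θ, hθ⟩ := h
  obtain ⟨θ', hθ'⟩ := h'
  refine ⟨θ.comp θ' rfl, fun i hi Y x => ?_⟩
  obtain ⟨k, hk⟩ : ∃ k, k = m + (m' + i) := ⟨_, rfl⟩
  have e : m + m' + i = k := by omega
  suffices H : ∀ (k : ℕ) (_ : k = m + (m' + i)) (e : m + m' + i = k) (x : Abelian.Ext X Y k),
      ∃ y : Abelian.Ext X'' Y i, (θ.comp θ' rfl).comp y e = x from
    H (m + m' + i) (by omega) rfl x
  rintro k rfl e x
  obtain ⟨y, rfl⟩ := hθ (m' + i) (by omega) Y x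
  obtain ⟨z, rfl⟩ := hθ' i (by omega) Y y
  exact ⟨z, Abelian.Ext.comp_assoc _ _ _ _ _ e⟩

lemma Lifts.of_iso {X X' : ModuleCat.{u} A} (e : X ≅ X') : Lifts X X' 0 0 := by
  refine ⟨Abelian.Ext.mk₀ e.hom, fun i _ Y x => ?_⟩
  suffices H : ∀ (k : ℕ) (_ : k = i) (h : 0 + i = k) (x : Abelian.Ext X Y k),
      ∃ y : Abelian.Ext X' Y i, (Abelian.Ext.mk₀ e.hom).comp y h = x from
    H (0 + i) (by omega) rfl x
  rintro k rfl h x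
  exact ⟨(Abelian.Ext.mk₀ e.inv).comp x (zero_add _), by simp⟩

lemma Lifts.of_ses {S : ShortComplex (ModuleCat.{u} A)} (hS : S.ShortExact) (p : ℕ)
    (h : HasProjectiveDimensionLT S.X₂ (p + 1)) : Lifts S.X₃ S.X₁ 1 p := by
  refine ⟨hS.extClass, fun i hi Y x => ?_⟩
  exact Abelian.Ext.contravariant_sequence_exact₃ hS Y x
    (Abelian.Ext.eq_zero_of_hasProjectiveDimensionLT _ (p + 1) (by omega)) rfl

/-- If `X` lifts to itself with positive shift and its self-extensions vanish in high degree,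
then it has finite projective dimension. -/
lemma Lifts.finite {X : ModuleCat.{u} A} {m p : ℕ} (h : Lifts X X m p) (hm : 0 < m)
    (hv : ∀ᶠ i in atTop, Subsingleton (Abelian.Ext X X i)) :
    ∃ n, HasProjectiveDimensionLT X n := by
  have hr : ∀ r : ℕ, Lifts X X (r * m) p := by
    intro r
    induction r with
    | zero =>
      have h0 := (Lifts.of_iso (Iso.refl X)).trans (Lifts.of_iso (Iso.refl X))
        (q := p) (Nat.zero_le p) (Nat.zero_le p)
      simpa using h0
    | succ r ih => rw [Nat.succ_mul]; exact ih.trans h le_rfl le_rfl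
  obtain ⟨J, hJ⟩ := eventually_atTop.1 hv
  have hJm : J ≤ J * m := Nat.le_mul_of_pos_right _ hm
  obtain ⟨θ, hθ⟩ := hr J
  have h0 : θ = 0 := (hJ _ hJm).elim _ _
  subst h0
  refine ⟨J * m + p, HasProjectiveDimensionLT.mk fun i hi Y e => ?_⟩
  obtain ⟨k, rfl⟩ := Nat.exists_eq_add_of_le hi
  suffices H : ∀ (l : ℕ) (_ : l = J * m + (p + k)) (e : Abelian.Ext X Y l), e = 0 from
    H _ (by omega) e
  rintro l rfl e
  obtain ⟨y, rfl⟩ := hθ (p + k) (by omega) Y e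
  simp

/-- Eventual vanishing of `Ext`. -/
def EvV (X Y : ModuleCat.{u} A) : Prop := ∀ᶠ i in atTop, ∀ x : Abelian.Ext X Y i, x = 0

lemma EvV.syz {S : ShortComplex (ModuleCat.{u} A)} (hS : S.ShortExact) [Projective S.X₂]
    {Y : ModuleCat.{u} A} (h : EvV S.X₃ Y) : EvV S.X₁ Y := by
  obtain ⟨J, hJ⟩ := eventually_atTop.1 h
  refine eventually_atTop.2 ⟨J + 1, fun i hi x => ?_⟩
  obtain ⟨k, rfl⟩ : ∃ k, i = k + 1 := ⟨i - 1, by omega⟩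
  obtain ⟨y, rfl⟩ := Abelian.Ext.contravariant_sequence_exact₁ hS Y x rfl
    (hJ _ (by omega) _)
  rw [Abelian.Ext.eq_zero_of_projective y, Abelian.Ext.comp_zero]

lemma EvV.mid {S : ShortComplex (ModuleCat.{u} A)} (hS : S.ShortExact)
    {Y : ModuleCat.{u} A} (h : EvV S.X₁ Y) (h' : EvV S.X₃ Y) : EvV S.X₂ Y := by
  unfold EvV
  filter_upwards [h, h'] with i hi hi' x
  obtain ⟨y, rfl⟩ := Abelian.Ext.contravariant_sequence_exact₂ hS Y x (hi _)
  rw [hi' y, Abelian.Ext.comp_zero]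

lemma EvV.iso {X X' : ModuleCat.{u} A} (e : X ≅ X') {Y : ModuleCat.{u} A} (h : EvV X' Y) :
    EvV X Y := by
  unfold EvV
  filter_upwards [h] with i hi x
  have : x = (Abelian.Ext.mk₀ e.hom).comp
      ((Abelian.Ext.mk₀ e.inv).comp x (zero_add _)) (zero_add _) := by simp
  rw [this, hi ((Abelian.Ext.mk₀ e.inv).comp x (zero_add _)), Abelian.Ext.comp_zero]

end Lifts

variable [IsLocalRing A]

/-- The syzygies of a minimal free resolution. -/
def MinFreeRes.syz {M : Type u} [AddCommGroup M] [Module A M] (R : MinFreeRes A M) :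
    ℕ → ModuleCat.{u} A
  | 0 => ModuleCat.of A M
  | 1 => ModuleCat.of A (LinearMap.ker R.aug)
  | (n + 2) => ModuleCat.of A (LinearMap.ker (R.d n))

lemma mem_smul_top_of_coord {n : ℕ} (x : Fin n → A) (I : Ideal A) (h : ∀ i, x i ∈ I) :
    x ∈ I • (⊤ : Submodule A (Fin n → A)) := by
  rw [pi_eq_sum_univ' x]
  exact Submodule.sum_mem _ fun i _ => Submodule.smul_mem_smul (h i) trivial

lemma MinFreeRes.syz_ses {M : Type u} [AddCommGroup M] [Module A M] (R : MinFreeRes A M)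
    (n : ℕ) : ∃ (f : R.syz (n + 1) ⟶ ModuleCat.of A (Fin (R.b n) → A))
      (g : ModuleCat.of A (Fin (R.b n) → A) ⟶ R.syz n) (w : f ≫ g = 0),
      (ShortComplex.mk f g w).ShortExact ∧
        ∀ z, f.hom z ∈ maximalIdeal A • (⊤ : Submodule A (Fin (R.b n) → A)) := by
  have key : ∀ {F G H : Type u} [AddCommGroup F] [AddCommGroup G] [AddCommGroup H]
      [Module A F] [Module A G] [Module A H] (f : F →ₗ[A] G) (g : G →ₗ[A] H)
      (_ : Function.Injective f) (_ : Function.Exact f g) (_ : Function.Surjective g),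
      ∃ w, (ShortComplex.mk (ModuleCat.ofHom f) (ModuleCat.ofHom g) w).ShortExact := by
    intro F G H _ _ _ _ _ _ f g hf hfg hg
    have w : ModuleCat.ofHom f ≫ ModuleCat.ofHom g = 0 := by
      rw [← ModuleCat.ofHom_comp, hfg.linearMap_comp_eq_zero]; rfl
    refine ⟨w, ?_⟩
    refine { exact := ?_, mono_f := ?_, epi_g := ?_ }
    · exact (ShortComplex.ShortExact.moduleCat_exact_iff_function_exact _).2 hfg
    · exact (ModuleCat.mono_iff_injective _).2 hf
    · exact (ModuleCat.epi_iff_surjective _).2 hg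
  match n with
  | 0 =>
    obtain ⟨w, h⟩ := key (LinearMap.ker R.aug).subtype R.aug Subtype.val_injective
      (LinearMap.exact_subtype_ker_map _) R.aug_surjective
    refine ⟨_, _, w, h, fun z => ?_⟩
    obtain ⟨z, hz⟩ := z
    obtain ⟨y, rfl⟩ := (R.exact_zero z).1 hz
    exact mem_smul_top_of_coord _ _ (R.minimal 0 y)
  | 1 =>
    have h0 : ∀ x, R.d 0 x ∈ LinearMap.ker R.aug := fun x => (R.exact_zero _).2 ⟨x, rfl⟩
    obtain ⟨w, h⟩ := key (LinearMap.ker (R.d 0)).subtype ((R.d 0).codRestrict _ h0)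
      Subtype.val_injective (fun x => by simp [Subtype.ext_iff])
      (fun ⟨z, hz⟩ => by
        obtain ⟨y, rfl⟩ := (R.exact_zero z).1 hz
        exact ⟨y, rfl⟩)
    refine ⟨_, _, w, h, fun z => ?_⟩
    obtain ⟨z, hz⟩ := z
    obtain ⟨y, rfl⟩ := (R.exact_succ 0 z).1 hz
    exact mem_smul_top_of_coord _ _ (R.minimal 1 y)
  | n + 2 =>
    have h0 : ∀ x, R.d (n + 1) x ∈ LinearMap.ker (R.d n) :=
      fun x => (R.exact_succ n _).2 ⟨x, rfl⟩
    obtain ⟨w, h⟩ := key (LinearMap.ker (R.d (n + 1))).subtype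
      ((R.d (n + 1)).codRestrict _ h0)
      Subtype.val_injective (fun x => by simp [Subtype.ext_iff])
      (fun ⟨z, hz⟩ => by
        obtain ⟨y, rfl⟩ := (R.exact_succ n z).1 hz
        exact ⟨y, rfl⟩)
    refine ⟨_, _, w, h, fun z => ?_⟩
    obtain ⟨z, hz⟩ := z
    obtain ⟨y, rfl⟩ := (R.exact_succ (n + 1) z).1 hz
    exact mem_smul_top_of_coord _ _ (R.minimal (n + 2) y)

instance projective_fin_fun (n : ℕ) : Projective (ModuleCat.of A (Fin n → A)) :=
  ModuleCat.projective_of_free (Pi.basisFun A (Fin n))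

section

variable {M : Type u} [AddCommGroup M] [Module A M] (R : MinFreeRes A M)

lemma MinFreeRes.pd_of_syz (m : ℕ) (c : ℕ) (h : HasProjectiveDimensionLT (R.syz m) c) :
    HasProjectiveDimensionLT (ModuleCat.of A M) (m + c) := by
  induction m generalizing c with
  | zero => rw [zero_add]; exact h
  | succ m ih =>
    obtain ⟨f, g, w, hS, -⟩ := R.syz_ses m
    have := ih (c + 1) (hS.hasProjectiveDimensionLT_X₃ c h
      (hasProjectiveDimensionLT_of_ge _ 1 _ (by omega)))
    rwa [show m + 1 + c = m + (c + 1) by omega]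

lemma MinFreeRes.syz_projective (m : ℕ) (c : ℕ)
    (h : HasProjectiveDimensionLT (ModuleCat.of A M) (m + 1 + c)) :
    HasProjectiveDimensionLT (R.syz m) (c + 1) := by
  induction m generalizing c with
  | zero => rw [show 0 + 1 + c = c + 1 by omega] at h; exact h
  | succ m ih =>
    obtain ⟨f, g, w, hS, -⟩ := R.syz_ses m
    have := ih (c + 1) (by rwa [show m + 1 + (c + 1) = m + 1 + 1 + c by omega])
    exact hS.hasProjectiveDimensionLT_X₁ (c + 1)
      (hasProjectiveDimensionLT_of_ge _ 1 _ (by omega)) this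

lemma HasFiniteProjDim.pd (h : HasFiniteProjDim A M) :
    ∃ n, HasProjectiveDimensionLT (ModuleCat.of A M) n := by
  obtain ⟨t, R, hR⟩ := h
  obtain ⟨f, g, w, hS, -⟩ := R.syz_ses (t + 1)
  refine ⟨_, R.pd_of_syz (t + 1) 0 (IsZero.hasProjectiveDimensionLT_zero ?_)⟩
  have hg : Epi g := hS.epi_g
  have h0 : R.b (t + 1) = 0 := hR _ (by omega)
  have : IsEmpty (Fin (R.b (t + 1))) := by rw [h0]; infer_instance
  rw [ModuleCat.isZero_iff_subsingleton]
  exact ((ModuleCat.epi_iff_surjective g).1 hg).subsingleton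

lemma MinFreeRes.hasFiniteProjDim [IsNoetherianRing A]
    {M : Type u} [AddCommGroup M] [Module A M] (R : MinFreeRes A M)
    (h : ∃ n, HasProjectiveDimensionLT (ModuleCat.of A M) n) : HasFiniteProjDim A M := by
  obtain ⟨J, hJ⟩ := h
  have hz : ∀ n, J ≤ n → Subsingleton (R.syz (n + 1)) := by
    intro n hn
    obtain ⟨f, g, w, hS, hm⟩ := R.syz_ses n
    have hproj : HasProjectiveDimensionLT (R.syz n) (0 + 1) :=
      R.syz_projective n 0 (hasProjectiveDimensionLT_of_ge _ J _ (by omega))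
    have hP : Projective (R.syz n) := projective_iff_hasProjectiveDimensionLT_one.2 hproj
    have hg : Epi g := hS.epi_g
    have hf : Mono f := hS.mono_f
    have hP3 : Projective (ShortComplex.mk f g w).X₃ := hP
    let sp := hS.splittingOfProjective
    have hfin : Module.Finite A (R.syz (n + 1)) :=
      Module.Finite.of_injective f.hom ((ModuleCat.mono_iff_injective f).1 hf)
    have htop : (⊤ : Submodule A (R.syz (n + 1))) ≤ maximalIdeal A • ⊤ := by
      intro z _
      have h1 : sp.r.hom (f.hom z) = z := by
        have := congrArg (fun q => q.hom z) sp.f_r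
        simpa using this
      rw [← h1]
      have h2 := Submodule.mem_map_of_mem (f := sp.r.hom) (hm z)
      rw [Submodule.map_smul''] at h2
      exact Submodule.smul_mono le_rfl le_top h2
    have hbot : (⊤ : Submodule A (R.syz (n + 1))) = ⊥ :=
      Submodule.eq_bot_of_le_smul_of_le_jacobson_bot (maximalIdeal A) ⊤ hfin.fg_top htop
        (by rw [jacobson_eq_maximalIdeal _ bot_ne_top])
    exact Submodule.subsingleton_iff A |>.1 (subsingleton_of_bot_eq_top hbot.symm)
  refine ⟨J, R, fun i hi => ?_⟩
  obtain ⟨n, rfl⟩ : ∃ n, i = n + 1 := ⟨i - 1, by omega⟩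
  obtain ⟨f, g, w, hS, -⟩ := R.syz_ses (n + 1)
  have h1 := hz n (by omega)
  have h2 := hz (n + 1) (by omega)
  have hex := (ShortComplex.ShortExact.moduleCat_exact_iff_function_exact _).1 hS.exact
  by_contra hb
  let j : Fin (R.b (n + 1)) := ⟨0, Nat.pos_of_ne_zero hb⟩
  let v : Fin (R.b (n + 1)) → A := fun _ => 1
  obtain ⟨z, hzv⟩ := (hex v).1 (h1.elim _ _)
  have : z = 0 := h2.elim _ _
  rw [this] at hzv
  have hv0 : (0 : Fin (R.b (n + 1)) → A) = v := by rw [← hzv]; exact (map_zero f.hom).symm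
  exact zero_ne_one (congrFun hv0 j)

lemma exists_res (h : complexity A M ≠ ⊤) : Nonempty (MinFreeRes A M) := by
  by_contra hne
  apply h
  unfold complexity
  rw [sInf_eq_top]
  rintro a ⟨t, -, R, -⟩
  exact (hne ⟨R⟩).elim

lemma HasFiniteProjDim.complexity (h : HasFiniteProjDim A M) : complexity A M = 0 := by
  obtain ⟨t, R, hR⟩ := h
  refine le_antisymm (sInf_le ⟨0, rfl, R, 0, ?_⟩) (by simp)
  filter_upwards [eventually_gt_atTop t] with n hn
  simp [hR n hn]

end

lemma IsSyzygyOf.exists_iso {M S : ModuleCat.{u} A} {n : ℕ} (hM : complexity A M ≠ ⊤)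
    (h : IsSyzygyOf A M S n) : ∃ R : MinFreeRes A M, Nonempty (S ≅ R.syz n) := by
  match n with
  | 0 =>
    obtain ⟨R⟩ := exists_res hM
    obtain ⟨e⟩ := h
    exact ⟨R, ⟨e.toModuleIso⟩⟩
  | 1 =>
    obtain ⟨R, ⟨e⟩⟩ := h
    exact ⟨R, ⟨e.toModuleIso⟩⟩
  | n + 2 =>
    obtain ⟨R, ⟨e⟩⟩ := h
    exact ⟨R, ⟨e.toModuleIso⟩⟩

lemma MinFreeRes.lifts {M : ModuleCat.{u} A} (R : MinFreeRes A M) (n : ℕ) :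
    Lifts M (R.syz n) n 0 := by
  induction n with
  | zero => exact Lifts.of_iso (Iso.refl M)
  | succ n ih =>
    obtain ⟨f, g, w, hS, -⟩ := R.syz_ses n
    refine ih.trans (Lifts.of_ses hS 0 ?_) le_rfl le_rfl
    exact hasProjectiveDimensionLT_of_ge _ 1 _ (by omega)

lemma MinFreeRes.evV {M : ModuleCat.{u} A} (R : MinFreeRes A M) (n : ℕ) {Y : ModuleCat.{u} A}
    (h : EvV M Y) : EvV (R.syz n) Y := by
  induction n with
  | zero => exact h
  | succ n ih =>
    obtain ⟨f, g, w, hS, -⟩ := R.syz_ses n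
    have : Projective (ShortComplex.mk f g w).X₂ := projective_fin_fun _
    exact EvV.syz hS ih

lemma IsSES.shortExact_s6 {M K S : ModuleCat.{u} A} {f : M →ₗ[A] K} {g : K →ₗ[A] S}
    (h : IsSES f g) : ∃ T : ShortComplex (ModuleCat.{u} A), T.ShortExact ∧
      T.X₁ = M ∧ T.X₂ = K ∧ T.X₃ = S := by
  have w : ModuleCat.ofHom f ≫ ModuleCat.ofHom g = 0 := by
    rw [← ModuleCat.ofHom_comp, h.2.1.linearMap_comp_eq_zero]; rfl
  refine ⟨ShortComplex.mk (X₁ := M) (X₂ := K) (X₃ := S) (ModuleCat.ofHom f) (ModuleCat.ofHom g) w,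
    ?_, rfl, rfl, rfl⟩
  refine { exact := ?_, mono_f := ?_, epi_g := ?_ }
  · exact (ShortComplex.ShortExact.moduleCat_exact_iff_function_exact _).2 h.2.1
  · exact (ModuleCat.mono_iff_injective _).2 h.1
  · exact (ModuleCat.epi_iff_surjective _).2 h.2.2

/-- A module of free reducible complexity and infinite projective dimension reduces to one of
complexity one. -/
lemma HasFreeRedCxCat.exists_cx_one {M : ModuleCat.{u} A} (hM : HasFreeRedCxCat M) :
    HasFiniteProjDim A M ∨ ∃ N : ModuleCat.{u} A, Module.Finite A N ∧ HasFreeRedCxCat N ∧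
      complexity A N = 1 ∧ (∃ m p, 0 < m ∧ Lifts N N m p) ∧ ∀ Y, EvV M Y → EvV N Y := by
  induction hM with
  | of_finite_projDim M hfg h => exact Or.inl h
  | step M K S n hfg hKfg hpos hfin hsyz f g hses hcx hK ih =>
    right
    obtain ⟨R, ⟨e⟩⟩ := hsyz.exists_iso hfin
    obtain ⟨T, hT, h1, h2, h3⟩ := hses.shortExact_s6
    rcases ih with hf | ⟨N, hN, hN', hc, hl, hY⟩
    · refine ⟨M, hfg, .step M K S n hfg hKfg hpos hfin hsyz f g hses hcx hK, ?_, ?_,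
        fun _ h => h⟩
      · rw [hf.complexity] at hcx
        exact le_antisymm (tsub_eq_zero_iff_le.1 hcx.symm) (Order.one_le_iff_pos.2 hpos)
      · obtain ⟨p, hp⟩ := hf.pd
        refine ⟨n + 0 + 1, p, by omega, ?_⟩
        have hp' : HasProjectiveDimensionLT K p := hp
        have hl := Lifts.of_ses hT p (by rw [h2]; exact hasProjectiveDimensionLT_of_ge _ p _ (by omega))
        rw [h1, h3] at hl
        exact ((R.lifts n).trans (Lifts.of_iso e.symm) le_rfl le_rfl).trans hl (by omega) le_rfl
    · refine ⟨N, hN, hN', hc, hl, fun Y h => hY Y ?_⟩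
      have := EvV.mid hT (Y := Y) (by rw [h1]; exact h)
        (by rw [h3]; exact EvV.iso e (R.evV n h))
      rwa [h2] at this

end ComplexityTest

end Helpers

/-- **Corollary 3.3**: a module `M` of free reducible complexity over the local ring `A`
has finite projective dimension if and only if `Ext^i_A(M,N) = 0` for `i ≫ 0` for every
module `N` of free reducible complexity with `cx N = 1`. -/
theorem hasFiniteProjDim_iff_extVanish_against_frc_one
    (A : Type u) [CommRing A] [IsLocalRing A] [IsNoetherianRing A]
    (M : Type u) [AddCommGroup M] [Module A M] [Module.Finite A M]
    (hM : HasFreeRedCx A M) :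
    HasFiniteProjDim A M ↔
      ∀ (N : Type u) [AddCommGroup N] [Module A N] [Module.Finite A N],
        HasFreeRedCx A N → complexity A N = 1 →
          ∀ᶠ i in Filter.atTop, extVanish A M i N := by
  constructor
  · intro h N _ _ _ _ _
    obtain ⟨n, hn⟩ := h.pd
    filter_upwards [eventually_ge_atTop (n + 1)] with i hi
    obtain ⟨p, rfl⟩ : ∃ p, i = p + 1 := ⟨i - 1, by omega⟩
    rw [extVanish_succ_iff]
    exact subsingleton_of_forall_eq 0 fun x =>
      Abelian.Ext.eq_zero_of_hasProjectiveDimensionLT x n (by omega)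
  · intro h
    rcases HasFreeRedCxCat.exists_cx_one hM with hf | ⟨N, hN, hN', hc, ⟨m, p, hm, hl⟩, hY⟩
    · exact hf
    · exfalso
      have hv := h N hN' hc
      have hEv : EvV (ModuleCat.of A M) N := by
        unfold EvV
        filter_upwards [hv, eventually_ge_atTop 1] with i hi hi1 x
        obtain ⟨p, rfl⟩ : ∃ p, i = p + 1 := ⟨i - 1, by omega⟩
        exact ((extVanish_succ_iff M N p).1 hi).elim _ _
      have hNN := hY N hEv
      have hfin := hl.finite hm (hNN.mono fun i hi => subsingleton_of_forall_eq 0 hi)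
      obtain ⟨R⟩ := exists_res (A := A) (M := N) (by rw [hc]; simp)
      have := (R.hasFiniteProjDim hfin).complexity
      rw [hc] at this
      exact one_ne_zero this
end
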